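/- Let S be a Boolean inverse semigroup. Then S is semisimple if and only if every nonzero element of S is above an atom and every nonzero element of S is a join of finitely many atoms. -/

import Mathlib

namespace Paper

/-- An inverse semigroup with zero: an associative multiplication, a zero that is
absorbing, and a map `⁻¹` sending each element to its unique generalized inverse. -/
class IsInverseSemigroup (S : Type*) [Mul S] [Zero S] [Inv S] : Prop where
  mul_assoc : ∀ a b c : S, a * b * c = a * (b * c)
  mul_inv_mul : ∀ a : S, a * a⁻¹ * a = a
  inv_mul_inv : ∀ a : S, a⁻¹ * a * a⁻¹ = a⁻¹
  inv_unique : ∀ a b : S, a * b * a = a → b * a * b = b → b = a⁻¹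
  zero_mul : ∀ a : S, 0 * a = 0
  mul_zero : ∀ a : S, a * 0 = 0

variable {S : Type*} [Mul S] [Zero S] [Inv S]

/-- The natural partial order: `a ≤ b` iff `a = b * a⁻¹ * a`. -/
def nle (a b : S) : Prop := a = b * a⁻¹ * a

/-- `e` is an idempotent. -/
def idem (e : S) : Prop := e * e = e

/-- `a` and `b` are compatible. -/
def compat (a b : S) : Prop := idem (a⁻¹ * b) ∧ idem (a * b⁻¹)

/-- `a` and `b` are orthogonal. -/
def orth (a b : S) : Prop := a⁻¹ * b = 0 ∧ a * b⁻¹ = 0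

/-- `j` is the least upper bound of `a` and `b` for the natural partial order. -/
def isJoin (a b j : S) : Prop :=
  nle a j ∧ nle b j ∧ ∀ c : S, nle a c → nle b c → nle j c

/-- `m` is the greatest lower bound of `a` and `b` for the natural partial order. -/
def isMeet (a b m : S) : Prop :=
  nle m a ∧ nle m b ∧ ∀ c : S, nle c a → nle c b → nle c m

/-- `a` is an atom: a nonzero element with nothing strictly between it and `0`. -/
def isAtomElem (a : S) : Prop := a ≠ 0 ∧ ∀ x : S, nle x a → x = a ∨ x = 0

/-- `s` is the least upper bound of the finite family `f`. -/
def isJoinFin {m : ℕ} (f : Fin m → S) (s : S) : Prop :=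
  (∀ i, nle (f i) s) ∧ ∀ c : S, (∀ i, nle (f i) c) → nle s c

/-- A Boolean inverse semigroup: a nonzero inverse semigroup with zero in which
compatible pairs have joins, multiplication distributes over binary compatible joins,
and the idempotents form a generalized Boolean algebra under the natural partial
order (meets of idempotents are automatically given by multiplication; the extra
requirement is the existence of relative complements). -/
class IsBooleanInverseSemigroup (S : Type*) [Mul S] [Zero S] [Inv S]
    extends IsInverseSemigroup S : Prop where
  exists_ne_zero : ∃ a : S, a ≠ 0
  compat_join : ∀ a b : S, compat a b → ∃ j, isJoin a b j
  mul_join : ∀ a b j c : S, isJoin a b j → isJoin (c * a) (c * b) (c * j)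
  join_mul : ∀ a b j c : S, isJoin a b j → isJoin (a * c) (b * c) (j * c)
  relcomp : ∀ e f : S, idem e → idem f → nle f e →
    ∃ g : S, idem g ∧ nle g e ∧ g * f = 0 ∧ isJoin f g e


section helpers

variable {S : Type*} [Mul S] [Zero S] [Inv S]

theorem massoc [IsInverseSemigroup S] (a b c : S) : a * b * c = a * (b * c) :=
  IsInverseSemigroup.mul_assoc a b c

theorem inv_absorb [IsInverseSemigroup S] (a : S) : a * (a⁻¹ * a) = a := by
  rw [← massoc]; exact IsInverseSemigroup.mul_inv_mul a

theorem idem_dom [IsInverseSemigroup S] (a : S) : idem (a⁻¹ * a) := by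
  unfold idem
  rw [massoc, inv_absorb]

theorem inv_idem [IsInverseSemigroup S] (e f : S) (he : idem e) (hf : idem f) :
    idem (e * f) ∧ (e * f)⁻¹ = e * f := by
  unfold idem at he hf
  have he' : ∀ y, e * (e * y) = e * y := fun y => by rw [← massoc, he]
  have hf' : ∀ y, f * (f * y) = f * y := fun y => by rw [← massoc, hf]
  have h1 := IsInverseSemigroup.mul_inv_mul (e * f)
  have h2 := IsInverseSemigroup.inv_mul_inv (e * f)
  have hu := IsInverseSemigroup.inv_unique (e * f)
  generalize (e * f)⁻¹ = x at *
  have h2' : ∀ y, x * (e * (f * (x * y))) = x * y := fun y => by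
    have := congrArg (· * y) h2
    simpa only [massoc] using this
  have hx : f * x * e = x := by
    apply hu
    · simp only [massoc, he', hf'] at h1 ⊢; exact h1
    · simp only [massoc, he', hf', h2']
  have hxx : x * x = x := by
    have : (f * x * e) * (f * x * e) = f * x * e := by
      simp only [massoc, h2']
    rwa [hx] at this
  have e1 : x = x⁻¹ := IsInverseSemigroup.inv_unique x x (by rw [hxx, hxx]) (by rw [hxx, hxx])
  have e2 : e * f = x⁻¹ := IsInverseSemigroup.inv_unique x (e * f) h2 h1
  have e3 : e * f = x := e2.trans e1.symm
  exact ⟨by rw [e3]; exact hxx, e3.symm⟩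

theorem idem_comm [IsInverseSemigroup S] (e f : S) (he : idem e) (hf : idem f) :
    e * f = f * e := by
  have h1 := inv_idem e f he hf
  have h2 := inv_idem f e hf he
  have a1 := h1.1
  have a2 := h2.1
  unfold idem at he hf a1 a2
  have he' : ∀ y, e * (e * y) = e * y := fun y => by rw [← massoc, he]
  have hf' : ∀ y, f * (f * y) = f * y := fun y => by rw [← massoc, hf]
  rw [← h1.2]
  symm
  apply IsInverseSemigroup.inv_unique
  · simp only [massoc, he', hf'] at a1 ⊢; exact a1
  · simp only [massoc, he', hf'] at a2 ⊢; exact a2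

theorem nle_eq [IsInverseSemigroup S] {a b : S} (h : nle a b) : b * (a⁻¹ * a) = a := by
  unfold nle at h
  rw [← massoc]; exact h.symm

theorem nle_of [IsInverseSemigroup S] {b e : S} (he : idem e) : nle (b * e) b := by
  have key : ∀ a, a = b * e → nle a b := by
    intro a ha
    unfold nle
    have h0 := inv_absorb a
    have : b * (a⁻¹ * a) = a := by
      have hc := idem_comm (a⁻¹ * a) e (idem_dom a) he
      have hd : a⁻¹ * a * e = a⁻¹ * a := by
        have : a * e = a := by rw [ha, massoc, he]
        rw [massoc, this]
      calc b * (a⁻¹ * a) = b * (e * (a⁻¹ * a)) := by rw [← hc, hd]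
        _ = a * (a⁻¹ * a) := by rw [← massoc, ← ha]
        _ = a := h0
    rw [massoc]; exact this.symm
  exact key _ rfl

theorem nle_rfl [IsInverseSemigroup S] (a : S) : nle a a := by
  have := nle_of (b := a) (idem_dom a)
  rwa [inv_absorb] at this

theorem nle_tr [IsInverseSemigroup S] {a b c : S} (h : nle a b) (h' : nle b c) : nle a c := by
  have h1 := nle_eq h
  have h2 := nle_eq h'
  rw [← h2, massoc] at h1
  rw [← h1]
  exact nle_of (inv_idem _ _ (idem_dom b) (idem_dom a)).1

theorem nle_antis [IsInverseSemigroup S] {a b : S} (h : nle a b) (h' : nle b a) : a = b := by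
  have h1 := nle_eq h
  have h2 := nle_eq h'
  have hc := idem_comm _ _ (idem_dom a) (idem_dom b)
  calc a = a * (a⁻¹ * a) := (inv_absorb a).symm
    _ = b * (a⁻¹ * a) := by
      rw [inv_absorb, h1]
    _ = b * (b⁻¹ * b) * (a⁻¹ * a) := by rw [inv_absorb]
    _ = b * (a⁻¹ * a) * (b⁻¹ * b) := by rw [massoc, ← hc]; simp only [massoc]
    _ = b := by rw [h1, h2]

theorem dom_nle [IsInverseSemigroup S] {x a : S} (h : nle x a) :
    nle (x⁻¹ * x) (a⁻¹ * a) := by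
  have h1 := nle_eq h
  have hc := idem_comm _ _ (idem_dom x) (idem_dom a)
  have h3 : x * (a⁻¹ * a) = x := by
    calc x * (a⁻¹ * a) = a * (x⁻¹ * x) * (a⁻¹ * a) := by rw [h1]
      _ = a * (a⁻¹ * a) * (x⁻¹ * x) := by rw [massoc, hc]; simp only [massoc]
      _ = x := by rw [inv_absorb, h1]
  have h4 : (a⁻¹ * a) * (x⁻¹ * x) = x⁻¹ * x := by rw [← hc, massoc, h3]
  rw [← h4]
  exact nle_of (idem_dom x)

theorem zero_nle [IsInverseSemigroup S] (a : S) : nle 0 a := by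
  unfold nle
  rw [IsInverseSemigroup.mul_zero]

theorem nle_zero [IsInverseSemigroup S] {a : S} (h : nle a 0) : a = 0 :=
  nle_antis h (zero_nle a)

/-- Splitting an element along an element below it. -/
theorem split [IsBooleanInverseSemigroup S] {x a : S} (h : nle x a) :
    ∃ k : S, idem k ∧ (x⁻¹ * x) * k = 0 ∧ k * (x⁻¹ * x) = 0 ∧
      isJoin (x⁻¹ * x) k (a⁻¹ * a) := by
  obtain ⟨k, hk, -, h0, hj⟩ := IsBooleanInverseSemigroup.relcomp _ _ (idem_dom a) (idem_dom x)
    (dom_nle h)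
  exact ⟨k, hk, by rw [idem_comm _ _ (idem_dom x) hk, h0], h0, hj⟩

theorem split_join [IsBooleanInverseSemigroup S] {x a : S} (h : nle x a) (hx : x ≠ 0)
    (hxa : x ≠ a) : ∃ y, isJoin x y a ∧ y ≠ a := by
  obtain ⟨k, hk, h0, h1, hj⟩ := split h
  refine ⟨a * k, ?_, ?_⟩
  · have := IsBooleanInverseSemigroup.mul_join _ _ _ a hj
    rwa [nle_eq h, inv_absorb] at this
  · intro hak
    apply hx
    rw [← nle_eq h, ← hak, massoc, h1, IsInverseSemigroup.mul_zero]

theorem atom_mem [IsBooleanInverseSemigroup S] {m : ℕ} {f : Fin m → S} {a g : S}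
    (hf : ∀ i, isAtomElem (f i)) (hj : isJoinFin f a) (hg : isAtomElem g) (hga : nle g a) :
    ∃ i, f i = g := by
  by_contra hne
  have hne : ∀ i, f i ≠ g := fun i hi => hne ⟨i, hi⟩
  obtain ⟨k, hk, h0, h1, hjk⟩ := split hga
  have claim : ∀ i, nle (f i) (a * k) := by
    intro i
    have hd := nle_eq (hj.1 i)
    have hdi := idem_dom (f i)
    have hjj := IsBooleanInverseSemigroup.mul_join _ _ _ (f i) hjk
    have hfe : f i * (a⁻¹ * a) = f i := by
      calc f i * (a⁻¹ * a) = a * ((f i)⁻¹ * f i) * (a⁻¹ * a) := by rw [hd]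
        _ = a * (a⁻¹ * a) * ((f i)⁻¹ * f i) := by
          rw [massoc, idem_comm _ _ hdi (idem_dom a)]; simp only [massoc]
        _ = f i := by rw [inv_absorb, hd]
    rw [hfe] at hjj
    rcases (hf i).2 _ (nle_of (b := f i) (idem_dom g)) with h | h
    · exfalso
      have h2 : g * ((f i)⁻¹ * f i) = f i := by
        calc g * ((f i)⁻¹ * f i) = a * (g⁻¹ * g) * ((f i)⁻¹ * f i) := by rw [nle_eq hga]
          _ = a * ((f i)⁻¹ * f i) * (g⁻¹ * g) := by
            rw [massoc, idem_comm _ _ (idem_dom g) hdi]; simp only [massoc]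
          _ = f i := by rw [hd, h]
      have h3 : nle (f i) g := by
        have := nle_of (b := g) hdi
        rwa [h2] at this
      rcases hg.2 _ h3 with h4 | h4
      · exact hne i h4
      · exact (hf i).1 h4
    · rw [h] at hjj
      have h2 : nle (f i) (f i * k) := hjj.2.2 _ (zero_nle _) (nle_rfl _)
      have h3 : f i * k = f i := nle_antis (nle_of hk) h2
      have h4 : a * k * ((f i)⁻¹ * f i) = f i := by
        rw [massoc, idem_comm _ _ hk hdi, ← massoc, hd, h3]
      have := nle_of (b := a * k) hdi
      rwa [h4] at this
  have h2 : a * k = a := nle_antis (nle_of hk) (hj.2 _ claim)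
  apply hg.1
  rw [← nle_eq hga, ← h2, massoc, h1, IsInverseSemigroup.mul_zero]

theorem card_lt [IsInverseSemigroup S] (hfin : ∀ a : S, {x : S | nle x a}.Finite) {x a : S}
    (h : nle x a) (hne : x ≠ a) : {y : S | nle y x}.ncard < {y : S | nle y a}.ncard := by
  apply Set.ncard_lt_ncard _ (hfin a)
  refine ⟨fun y hy => nle_tr hy h, fun hs => hne ?_⟩
  exact nle_antis h (hs (nle_rfl a))

theorem exists_atom [IsInverseSemigroup S] (hfin : ∀ a : S, {x : S | nle x a}.Finite) (n : ℕ) :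
    ∀ a : S, {y : S | nle y a}.ncard = n → a ≠ 0 → ∃ x : S, isAtomElem x ∧ nle x a := by
  induction n using Nat.strong_induction_on with
  | _ n ih =>
    intro a hn ha
    by_cases hat : isAtomElem a
    · exact ⟨a, hat, nle_rfl a⟩
    · have : ∃ x, nle x a ∧ x ≠ a ∧ x ≠ 0 := by
        by_contra hc
        apply hat
        refine ⟨ha, fun x hx => ?_⟩
        by_contra hd
        exact hc ⟨x, hx, fun h => hd (Or.inl h), fun h => hd (Or.inr h)⟩
      obtain ⟨x, hx, hxa, hx0⟩ := this
      obtain ⟨z, hz, hzx⟩ := ih _ (hn ▸ card_lt hfin hx hxa) x rfl hx0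
      exact ⟨z, hz, nle_tr hzx hx⟩

theorem atoms_sup [IsBooleanInverseSemigroup S] (hfin : ∀ a : S, {x : S | nle x a}.Finite)
    (n : ℕ) : ∀ a : S, {y : S | nle y a}.ncard = n →
      ∀ c, (∀ x, isAtomElem x → nle x a → nle x c) → nle a c := by
  induction n using Nat.strong_induction_on with
  | _ n ih =>
    intro a hn c hc
    by_cases ha : a = 0
    · rw [ha]; exact zero_nle c
    by_cases hat : isAtomElem a
    · exact hc a hat (nle_rfl a)
    · have : ∃ x, nle x a ∧ x ≠ a ∧ x ≠ 0 := by
        by_contra hc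
        apply hat
        refine ⟨ha, fun x hx => ?_⟩
        by_contra hd
        exact hc ⟨x, hx, fun h => hd (Or.inl h), fun h => hd (Or.inr h)⟩
      obtain ⟨x, hx, hxa, hx0⟩ := this
      obtain ⟨y, hy, hya⟩ := split_join hx hx0 hxa
      apply hy.2.2
      · exact ih _ (hn ▸ card_lt hfin hx hxa) x rfl c (fun z hz hzx => hc z hz (nle_tr hzx hx))
      · exact ih _ (hn ▸ card_lt hfin hy.2.1 hya) y rfl c
          (fun z hz hzx => hc z hz (nle_tr hzx hy.2.1))

end helpers

/-- A Boolean inverse semigroup is semisimple (every principal order ideal is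
finite) iff every nonzero element is above an atom and every nonzero element is a
join of finitely many atoms. -/
theorem semisimple_iff_atoms (S : Type*) [Mul S] [Zero S] [Inv S]
    [IsBooleanInverseSemigroup S] :
    (∀ a : S, {x : S | nle x a}.Finite) ↔
      ((∀ a : S, a ≠ 0 → ∃ x : S, isAtomElem x ∧ nle x a) ∧
       (∀ a : S, a ≠ 0 → ∃ (m : ℕ) (f : Fin (m + 1) → S),
          (∀ i, isAtomElem (f i)) ∧ isJoinFin f a)) := by
  constructor
  · intro hfin
    refine ⟨fun a ha => exists_atom hfin _ a rfl ha, fun a ha => ?_⟩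
    have hAf : {x : S | isAtomElem x ∧ nle x a}.Finite :=
      (hfin a).subset (fun x hx => hx.2)
    obtain ⟨n, f, -, hf⟩ := hAf.fin_param
    have hmem : ∀ i, isAtomElem (f i) ∧ nle (f i) a := fun i => by
      have : f i ∈ Set.range f := ⟨i, rfl⟩
      rwa [hf] at this
    have hsur : ∀ x, isAtomElem x → nle x a → ∃ i, f i = x := fun x h1 h2 => by
      have : x ∈ Set.range f := by rw [hf]; exact ⟨h1, h2⟩
      exact this
    obtain ⟨x, hx, hxa⟩ := exists_atom hfin _ a rfl ha
    obtain ⟨i, -⟩ := hsur x hx hxa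
    cases n with
    | zero => exact i.elim0
    | succ m =>
      refine ⟨m, f, fun i => (hmem i).1, fun i => (hmem i).2, fun c hc => ?_⟩
      apply atoms_sup hfin _ a rfl
      intro x hx hxa
      obtain ⟨i, rfl⟩ := hsur x hx hxa
      exact hc i
  · rintro ⟨-, hj⟩ a
    by_cases ha : a = 0
    · subst ha
      exact (Set.finite_singleton (0 : S)).subset (fun x hx => nle_zero hx)
    obtain ⟨m, f, hf, hfa⟩ := hj a ha
    have key : ∀ x y : S, nle x a → {i | nle (f i) x} = {i | nle (f i) y} → nle x y := by
      intro x y hx hxy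
      by_cases hx0 : x = 0
      · rw [hx0]; exact zero_nle y
      obtain ⟨k, g, hg, hgx⟩ := hj x hx0
      apply hgx.2
      intro i
      obtain ⟨l, hl⟩ := atom_mem hf hfa (hg i) (nle_tr (hgx.1 i) hx)
      have : l ∈ {i | nle (f i) x} := by
        show nle (f l) x
        rw [hl]; exact hgx.1 i
      rw [hxy] at this
      rw [← hl]; exact this
    apply Set.Finite.of_finite_image (f := fun x => {i | nle (f i) x}) (Set.toFinite _)
    intro x hx y hy hxy
    exact nle_antis (key x y hx hxy) (key y x hy hxy.symm)

end Paper
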